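/- Let A be an abelian category with enough injectives, let N and B be objects of A, and let n ≥ 1. Let I• be a cochain complex in A concentrated in nonnegative degrees such that every Iˢ is injective, H⁰(I•) ≅ B, and Hˢ(I•) = 0 for all 1 ≤ s ≤ n. Then the abelian group of homotopy classes of cochain maps from the complex consisting of N concentrated in cohomological degree n to I• is naturally isomorphic to Ext^n_A(N, B). -/

import Mathlib

open CategoryTheory Limits

universe w v u

variable {A : Type u} [Category.{v} A] [Abelian A]

/-- The short complex `Z^i → I^i → Z^j`. -/
noncomputable def cyclesSC (I : CochainComplex A ℕ) (i j : ℕ) (hij : i + 1 = j) :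
    ShortComplex A :=
  ShortComplex.mk (I.iCycles i) (I.toCycles i j) (by
    rw [← cancel_mono (I.iCycles j), Category.assoc, HomologicalComplex.toCycles_i]
    simp)

lemma cyclesSC_shortExact (I : CochainComplex A ℕ) (i j : ℕ) (hij : i + 1 = j)
    (hz : IsZero (I.homology j)) : (cyclesSC I i j hij).ShortExact := by
  have hepi : Epi (I.toCycles i j) :=
    Preadditive.epi_of_isZero_cokernel' _
      (I.homologyIsCokernel i j (by subst hij; simp)) hz
  have hm : Mono (cyclesSC I i j hij).f := by dsimp [cyclesSC]; infer_instance
  have he : Epi (cyclesSC I i j hij).g := hepi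
  refine ShortComplex.ShortExact.mk' ?_ hm he
  apply ShortComplex.exact_of_f_is_kernel
  refine KernelFork.IsLimit.ofι' _ _ (fun {W} k hk => ⟨I.liftCycles k j (by simpa using hij) ?_, ?_⟩)
  · have hkzero : (show W ⟶ I.X i from k) ≫ I.toCycles i j = 0 := hk
    have := hkzero =≫ I.iCycles j
    rw [Category.assoc, HomologicalComplex.toCycles_i, zero_comp] at this
    exact this
  · exact I.liftCycles_i _ _ _ _

lemma extClass_surj [HasExt.{w} A] (N : A) (S : ShortComplex A) (hS : S.ShortExact)
    (hi : Injective S.X₂) (k l : ℕ) (hl : k + 1 = l) :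
    Function.Surjective (hS.extClass.postcomp N hl : Abelian.Ext.{w} N S.X₃ k →+ _) := by
  intro x
  subst hl
  exact Abelian.Ext.covariant_sequence_exact₁ (X := N) (hS := hS) x
    (Abelian.Ext.eq_zero_of_injective _) rfl

lemma extClass_inj [HasExt.{w} A] (N : A) (S : ShortComplex A) (hS : S.ShortExact)
    (hi : Injective S.X₂) (k l : ℕ) (hl : k + 1 + 1 = l) (x : Abelian.Ext.{w} N S.X₃ (k + 1)) :
    hS.extClass.postcomp N hl x = 0 ↔ x = 0 := by
  constructor
  · intro hx
    obtain ⟨y, hy⟩ := Abelian.Ext.covariant_sequence_exact₃ (X := N) (hS := hS) x hl hx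
    rw [← hy, Abelian.Ext.eq_zero_of_injective y, Abelian.Ext.zero_comp]
  · rintro rfl
    exact map_zero _

lemma extClass_ker [HasExt.{w} A] (N : A) (S : ShortComplex A) (hS : S.ShortExact)
    (f : N ⟶ S.X₃) :
    hS.extClass.postcomp N (zero_add 1) (Abelian.Ext.mk₀.{w} f) = 0 ↔
      ∃ h : N ⟶ S.X₂, h ≫ S.g = f := by
  constructor
  · intro hf
    obtain ⟨y, hy⟩ := Abelian.Ext.covariant_sequence_exact₃ (X := N) (hS := hS)
      (Abelian.Ext.mk₀ f) (zero_add 1) hf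
    obtain ⟨h, rfl⟩ := Abelian.Ext.homEquiv₀.symm.surjective y
    refine ⟨h, ?_⟩
    apply Abelian.Ext.homEquiv₀.symm.injective
    simpa using hy
  · rintro ⟨h, rfl⟩
    change (Abelian.Ext.mk₀ (h ≫ S.g)).comp hS.extClass (zero_add 1) = 0
    rw [← Abelian.Ext.mk₀_comp_mk₀, Abelian.Ext.comp_assoc (h₁₂ := zero_add 0)
      (h₂₃ := zero_add 1) (h := by lia),
      ShortComplex.ShortExact.comp_extClass, Abelian.Ext.comp_zero]

lemma exists_hom_ext [HasExt.{w} A] (N : A) (I : CochainComplex A ℕ)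
    (hinj : ∀ s : ℕ, Injective (I.X s)) (m : ℕ)
    (hvan : ∀ s : ℕ, 1 ≤ s → s ≤ m + 1 → IsZero (I.homology s)) (k : ℕ) :
    ∀ (s : ℕ), s + k = m →
      ∃ φ : (N ⟶ I.cycles (m + 1)) →+ Abelian.Ext.{w} N (I.cycles s) (k + 1),
        Function.Surjective φ ∧
        ∀ f, φ f = 0 ↔ ∃ h : N ⟶ I.X m, h ≫ I.toCycles m (m + 1) = f := by
  induction k with
  | zero =>
    intro s hs
    obtain rfl : s = m := by lia
    have hS := cyclesSC_shortExact I s (s + 1) rfl (hvan _ (by lia) (by lia))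
    let a : (N ⟶ I.cycles (s + 1)) ≃+ Abelian.Ext.{w} N (I.cycles (s + 1)) 0 :=
      Abelian.Ext.addEquiv₀.symm
    have ha (f) : a f = Abelian.Ext.mk₀ f := Abelian.Ext.addEquiv₀_symm_apply f
    let p : Abelian.Ext.{w} N (I.cycles (s + 1)) 0 →+ Abelian.Ext.{w} N (I.cycles s) (0 + 1) :=
      hS.extClass.postcomp N (zero_add 1)
    have hp : Function.Surjective p := extClass_surj N _ hS (hinj s) 0 _ (zero_add 1)
    refine ⟨p.comp (a : _ →+ _), hp.comp a.surjective, fun f => ?_⟩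
    have h1 : (p.comp (a : _ →+ _)) f = p (Abelian.Ext.mk₀ f) := congrArg p (ha f)
    rw [h1]
    exact extClass_ker N _ hS f
  | succ k ih =>
    intro s hs
    obtain ⟨φ, hφ, hker_phi⟩ := ih (s + 1) (by lia)
    have hS := cyclesSC_shortExact I s (s + 1) rfl (hvan _ (by lia) (by lia))
    exact ⟨(hS.extClass.postcomp N rfl).comp φ,
      (extClass_surj N _ hS (hinj s) _ _ rfl).comp hφ,
      fun f => (extClass_inj N _ hS (hinj s) _ _ rfl (φ f)).trans (hker_phi f)⟩

/-- Cochain maps out of a single complex, seen as maps to the cycles. -/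
noncomputable def singleToCycles (N : A) (I : CochainComplex A ℕ) (n : ℕ) :
    ((HomologicalComplex.single A (ComplexShape.up ℕ) n).obj N ⟶ I) →+ (N ⟶ I.cycles n) where
  toFun f := I.liftCycles
    ((HomologicalComplex.singleObjXSelf (ComplexShape.up ℕ) n N).inv ≫ f.f n) (n + 1) (by simp)
    (by simp)
  map_zero' := by simp [← cancel_mono (I.iCycles n)]
  map_add' f g := by simp [← cancel_mono (I.iCycles n)]

lemma singleToCycles_i (N : A) (I : CochainComplex A ℕ) (n : ℕ)
    (f : (HomologicalComplex.single A (ComplexShape.up ℕ) n).obj N ⟶ I) :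
    singleToCycles N I n f ≫ I.iCycles n =
      (HomologicalComplex.singleObjXSelf (ComplexShape.up ℕ) n N).inv ≫ f.f n := by
  simp [singleToCycles]

lemma singleToCycles_surjective (N : A) (I : CochainComplex A ℕ) (n : ℕ) :
    Function.Surjective (singleToCycles N I n) := by
  intro g
  refine ⟨HomologicalComplex.mkHomFromSingle (g ≫ I.iCycles n) (by simp), ?_⟩
  rw [← cancel_mono (I.iCycles n), singleToCycles_i]
  simp

lemma singleToCycles_homotopy (N : A) (I : CochainComplex A ℕ) (m : ℕ)
    (f : (HomologicalComplex.single A (ComplexShape.up ℕ) (m + 1)).obj N ⟶ I) :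
    Nonempty (Homotopy f 0) ↔
      ∃ h : N ⟶ I.X m, h ≫ I.toCycles m (m + 1) = singleToCycles N I (m + 1) f := by
  constructor
  · rintro ⟨H⟩
    refine ⟨(HomologicalComplex.singleObjXSelf (ComplexShape.up ℕ) (m + 1) N).inv ≫
      H.hom (m + 1) m, ?_⟩
    rw [← cancel_mono (I.iCycles (m + 1)), singleToCycles_i, H.comm (m + 1),
      dNext_eq _ (show (ComplexShape.up ℕ).Rel (m + 1) (m + 2) by simp),
      prevD_eq _ (show (ComplexShape.up ℕ).Rel m (m + 1) by simp)]
    simp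
  · rintro ⟨h, hh⟩
    let H : ∀ i j, (ComplexShape.up ℕ).Rel j i →
        (((HomologicalComplex.single A (ComplexShape.up ℕ) (m + 1)).obj N).X i ⟶ I.X j) :=
      fun i j hij => if hi : i = m + 1 then
        (HomologicalComplex.singleObjXIsoOfEq (ComplexShape.up ℕ) (m + 1) N i hi).hom ≫ h ≫
          (I.XIsoOfEq (show m = j by simp at hij; lia)).hom else 0
    have hf : f = Homotopy.nullHomotopicMap' H := by
      apply HomologicalComplex.from_single_hom_ext
      rw [Homotopy.nullHomotopicMap'_f (show (ComplexShape.up ℕ).Rel m (m + 1) by simp)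
        (show (ComplexShape.up ℕ).Rel (m + 1) (m + 2) by simp)]
      rw [← cancel_epi (HomologicalComplex.singleObjXSelf (ComplexShape.up ℕ) (m + 1) N).inv,
        ← singleToCycles_i, ← hh]
      simp [H, HomologicalComplex.singleObjXSelf]
    rw [hf]
    exact ⟨Homotopy.nullHomotopy' H⟩

/-- Let `A` be an abelian category with enough injectives, `N`, `B` objects of `A` and
`n ≥ 1`. If `I•` is a nonnegatively graded cochain complex of injective objects with
`H⁰(I•) ≅ B` and `Hˢ(I•) = 0` for `1 ≤ s ≤ n`, then the abelian group of homotopy classes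
of cochain maps from the complex `N` concentrated in degree `n` to `I•` (i.e. the group of
morphisms in the homotopy category) is isomorphic to `Ext^n_A(N, B)`. -/
theorem homotopyClasses_addEquiv_ext
    [EnoughInjectives A] [CategoryTheory.HasExt.{w} A]
    (N B : A) (n : ℕ) (hn : 1 ≤ n)
    (I : CochainComplex A ℕ)
    (hinj : ∀ s : ℕ, Injective (I.X s))
    (e0 : I.homology 0 ≅ B)
    (hvan : ∀ s : ℕ, 1 ≤ s → s ≤ n → IsZero (I.homology s)) :
    Nonempty
      ((((HomotopyCategory.quotient A (ComplexShape.up ℕ)).obj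
            ((HomologicalComplex.single A (ComplexShape.up ℕ) n).obj N)) ⟶
          ((HomotopyCategory.quotient A (ComplexShape.up ℕ)).obj I)) ≃+
        Abelian.Ext N B n) := by
  obtain ⟨m, rfl⟩ : ∃ m, n = m + 1 := ⟨n - 1, by lia⟩
  obtain ⟨φ, hφ, hker_phi⟩ := exists_hom_ext.{w} N I hinj m hvan m 0 (zero_add m)
  let Q := HomotopyCategory.quotient A (ComplexShape.up ℕ)
  let K := (HomologicalComplex.single A (ComplexShape.up ℕ) (m + 1)).obj N
  let q : (K ⟶ I) →+ (Q.obj K ⟶ Q.obj I) := Q.mapAddHom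
  have hq : Function.Surjective q := Q.map_surjective
  let e : I.cycles 0 ≅ B := I.isoHomologyπ 0 0 (by simp) (by simp) ≪≫ e0
  let ψ : (K ⟶ I) →+ Abelian.Ext.{w} N (I.cycles 0) (m + 1) :=
    φ.comp (singleToCycles N I (m + 1))
  have hψ : Function.Surjective ψ := hφ.comp (singleToCycles_surjective N I (m + 1))
  have hker : q.ker = ψ.ker := by
    ext f
    rw [AddMonoidHom.mem_ker, AddMonoidHom.mem_ker]
    exact (HomotopyCategory.quotient_map_eq_zero_iff f).trans
      ((singleToCycles_homotopy N I m f).trans (hker_phi _).symm)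
  let E : Abelian.Ext.{w} N (I.cycles 0) (m + 1) ≃+ Abelian.Ext.{w} N B (m + 1) :=
    (((Abelian.extFunctorObj.{w} N (m + 1)).mapIso e).addCommGroupIsoToAddEquiv)
  exact ⟨(QuotientAddGroup.quotientKerEquivOfSurjective q hq).symm.trans
    ((QuotientAddGroup.quotientAddEquivOfEq hker).trans
      ((QuotientAddGroup.quotientKerEquivOfSurjective ψ hψ).trans E))⟩
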